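/- Let n ≥ 2 and let f : ℝ → ℝ be continuous. Suppose u is a bounded C² solution of u''(r) + ((n−1)/r)u'(r) + f(u(r)) = 0 on (R,∞) for some R > 0 which is monotone on (R,∞). Then there exists L ∈ ℝ such that lim_{r→∞} u(r) = L, lim_{r→∞} u'(r) = 0, and f(L) = 0. -/

import Mathlib

open Set Filter MeasureTheory

namespace Paper

noncomputable section

/-- `F s = ∫₀ˢ f t dt`. -/
def Fint (f : ℝ → ℝ) (s : ℝ) : ℝ := ∫ t in (0:ℝ)..s, f t

/-- Hypothesis (f1): `f` is odd, `f 0 = 0`, there are `β > b > 0` with `f > 0` on `(b,∞)`,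
`f ≤ 0`, `f ≢ 0` on `[0,b]`, and `F β = 0`. -/
def Hf1 (f : ℝ → ℝ) (b β : ℝ) : Prop :=
  (∀ s, f (-s) = -f s) ∧ f 0 = 0 ∧ 0 < b ∧ b < β ∧
    (∀ s, b < s → 0 < f s) ∧ (∀ s ∈ Icc (0:ℝ) b, f s ≤ 0) ∧
    (∃ s ∈ Icc (0:ℝ) b, f s ≠ 0) ∧ Fint f β = 0

/-- Hypothesis (f2): `f` continuous on `[0,∞)`, C¹ on `(0,∞)`, `f' ∈ L¹(0,1)`. -/
def Hf2 (f : ℝ → ℝ) : Prop :=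
  ContinuousOn f (Ici 0) ∧ (∀ s : ℝ, 0 < s → DifferentiableAt ℝ f s) ∧
    ContinuousOn (deriv f) (Ioi 0) ∧ IntegrableOn (deriv f) (Ioo 0 1)

/-- Hypothesis (f3): `f s ≥ f' s * (s - β)` for `s ≥ β`. -/
def Hf3 (f : ℝ → ℝ) (β : ℝ) : Prop := ∀ s, β ≤ s → deriv f s * (s - β) ≤ f s

/-- Hypothesis (f4): `(F/f)' s ≥ (n-2)/(2n)` for `s > β`. -/
def Hf4 (n : ℕ) (f : ℝ → ℝ) (β : ℝ) : Prop :=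
  ∀ s, β < s → ((n : ℝ) - 2) / (2 * (n : ℝ)) ≤ deriv (fun t => Fint f t / f t) s

/-- Hypothesis (f4'): `(F/f)' s ≥ (n-2)/2` for `s > β`. -/
def Hf4' (n : ℕ) (f : ℝ → ℝ) (β : ℝ) : Prop :=
  ∀ s, β < s → ((n : ℝ) - 2) / 2 ≤ deriv (fun t => Fint f t / f t) s

/-- Hypothesis (f5): `s ↦ s f' s / f s` is nonincreasing on `[β,∞)`. -/
def Hf5 (f : ℝ → ℝ) (β : ℝ) : Prop := AntitoneOn (fun s => s * deriv f s / f s) (Ici β)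

/-- Hypothesis (f6): `β f' β / f β ≤ n/(n-2)`. -/
def Hf6 (n : ℕ) (f : ℝ → ℝ) (β : ℝ) : Prop := β * deriv f β / f β ≤ (n : ℝ) / ((n : ℝ) - 2)

/-- Hypothesis (f1'): `f 0 = 0` and `s f s > 0` for `s > 0`. -/
def Hf1' (f : ℝ → ℝ) : Prop := f 0 = 0 ∧ ∀ s : ℝ, 0 < s → 0 < s * f s

/-- Hypothesis (f3'): `f s ≥ s f' s` for `s > 0`, with strict inequality at points
arbitrarily close to `0`. -/
def Hf3' (f : ℝ → ℝ) : Prop :=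
  (∀ s : ℝ, 0 < s → s * deriv f s ≤ f s) ∧
    ∀ ε : ℝ, 0 < ε → ∃ s ∈ Ioo (0:ℝ) ε, s * deriv f s < f s

/-- `v` is a C² solution of (E) on `(0,∞)`, continuous on `[0,∞)`,
with `v 0 = α` and `v' 0 = 0`. -/
def IVPsol (n : ℕ) (f : ℝ → ℝ) (α : ℝ) (v : ℝ → ℝ) : Prop :=
  v 0 = α ∧ deriv v 0 = 0 ∧ ContinuousOn v (Ici 0) ∧
    (∀ r : ℝ, 0 < r → DifferentiableAt ℝ v r ∧ DifferentiableAt ℝ (deriv v) r) ∧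
    (∀ r : ℝ, 0 < r → deriv (deriv v) r + ((n : ℝ) - 1) / r * deriv v r + f (v r) = 0)

/-- The family `α ↦ u α` of solutions of the IVP, with `u α r` and `u' α r`
continuous in `(α, r)`. -/
def Family (n : ℕ) (f : ℝ → ℝ) (u : ℝ → ℝ → ℝ) : Prop :=
  (∀ α : ℝ, 0 < α → IVPsol n f α (u α)) ∧
    ContinuousOn (fun p : ℝ × ℝ => u p.1 p.2) (Ioi 0 ×ˢ Ici 0) ∧
    ContinuousOn (fun p : ℝ × ℝ => deriv (u p.1) p.2) (Ioi 0 ×ˢ Ici 0)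

/-- The set whose supremum is `Z_k α`, given `T = T_{k-1} α`. -/
def ZsetAux (u : ℝ → ℝ → ℝ) (k : ℕ) (T α : ℝ) : Set ℝ :=
  {r | T < r ∧ ∀ s ∈ Ioo T r, (-1 : ℝ) ^ k * u α s < 0 ∧ 0 < (-1 : ℝ) ^ k * deriv (u α) s}

/-- The pair `(Z_k, T_k)`, with `T₀ = 0`;
`Z_k α = sup {r > T_{k-1} α | (-1)^k u < 0, (-1)^k u' > 0 on (T_{k-1} α, r)}` and
`T_k α = inf {r > Z_k α | u'(r, α) = 0}`. -/
def ZT (u : ℝ → ℝ → ℝ) : ℕ → (ℝ → ℝ) × (ℝ → ℝ)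
  | 0 => (fun _ => 0, fun _ => 0)
  | k + 1 =>
    let Z : ℝ → ℝ := fun α => sSup (ZsetAux u (k + 1) ((ZT u k).2 α) α)
    (Z, fun α => sInf {r | Z α < r ∧ deriv (u α) r = 0})

/-- `Z_k α` (as a real number; the genuine value when the defining set is bounded above). -/
def Zk (u : ℝ → ℝ → ℝ) (k : ℕ) (α : ℝ) : ℝ := (ZT u k).1 α

/-- `T_k α`, with `T₀ = 0`. -/
def Tk (u : ℝ → ℝ → ℝ) (k : ℕ) (α : ℝ) : ℝ := (ZT u k).2 α

/-- The defining set of `Z_k α`; `Z_k α = ∞` iff this set is unbounded above. -/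
def ZsetK (u : ℝ → ℝ → ℝ) (k : ℕ) (α : ℝ) : Set ℝ := ZsetAux u k (Tk u (k - 1) α) α

open Classical in
/-- The value of `u (·, α)` at `Z_k α`, as a limit `r → ∞` when `Z_k α = ∞`. -/
def uAtZ (u : ℝ → ℝ → ℝ) (k : ℕ) (α : ℝ) : ℝ :=
  if BddAbove (ZsetK u k α) then u α (Zk u k α) else limUnder atTop (u α)

open Classical in
/-- The value of `u' (·, α)` at `Z_k α`, as a limit `r → ∞` when `Z_k α = ∞`. -/
def duAtZ (u : ℝ → ℝ → ℝ) (k : ℕ) (α : ℝ) : ℝ :=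
  if BddAbove (ZsetK u k α) then deriv (u α) (Zk u k α) else limUnder atTop (deriv (u α))

open Classical in
/-- `Z_k α` as an extended real number. -/
def ZkE (u : ℝ → ℝ → ℝ) (k : ℕ) (α : ℝ) : WithTop ℝ :=
  if BddAbove (ZsetK u k α) then (Zk u k α : WithTop ℝ) else ⊤

/-- Membership in `F̃_k` (for `α ∈ N_{k-1}`): `(-1)^k u' (r, α) < 0` for all `r > Z_{k-1} α`. -/
def Ftil (u : ℝ → ℝ → ℝ) (k : ℕ) (α : ℝ) : Prop :=
  ∀ r, Zk u (k - 1) α < r → (-1 : ℝ) ^ k * deriv (u α) r < 0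

/-- The sets `N_k` (with `N₀ := (0,∞)`). -/
def Nk (u : ℝ → ℝ → ℝ) : ℕ → Set ℝ
  | 0 => Ioi 0
  | 1 => {α | 0 < α ∧ uAtZ u 1 α = 0 ∧ duAtZ u 1 α < 0}
  | k + 2 => {α | α ∈ Nk u (k + 1) ∧ ¬Ftil u (k + 2) α ∧ uAtZ u (k + 2) α = 0 ∧
      0 < (-1 : ℝ) ^ (k + 2) * duAtZ u (k + 2) α}

/-- The sets `G_k`. -/
def Gk (u : ℝ → ℝ → ℝ) : ℕ → Set ℝ
  | 0 => ∅
  | 1 => {α | 0 < α ∧ uAtZ u 1 α = 0 ∧ duAtZ u 1 α = 0}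
  | k + 2 => {α | α ∈ Nk u (k + 1) ∧ ¬Ftil u (k + 2) α ∧ uAtZ u (k + 2) α = 0 ∧
      duAtZ u (k + 2) α = 0}

/-- The set `F̃_k` (for `k ≥ 2`). -/
def FtilSet (u : ℝ → ℝ → ℝ) (k : ℕ) : Set ℝ := {α | α ∈ Nk u (k - 1) ∧ Ftil u k α}

/-- The set `F_k` (for `k ≥ 2`). -/
def Fk (u : ℝ → ℝ → ℝ) (k : ℕ) : Set ℝ :=
  {α | α ∈ Nk u (k - 1) ∧ ¬Ftil u k α ∧ (-1 : ℝ) ^ k * uAtZ u k α < 0}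

/-- The sets `P_k`. -/
def Pk (u : ℝ → ℝ → ℝ) : ℕ → Set ℝ
  | 0 => ∅
  | 1 => {α | 0 < α ∧ 0 < uAtZ u 1 α}
  | k + 2 => FtilSet u (k + 2) ∪ Fk u (k + 2)

/-- The set of extremal points (zeros of `u' (·, α)`) in `[0, A]`. -/
def ExtSet (u : ℝ → ℝ → ℝ) (α A : ℝ) : Set ℝ := {r | r ∈ Icc 0 A ∧ deriv (u α) r = 0}

/-- The conclusion of the δ₁-lemma (Lemma 4.1): every solution with initial value in
`(α*-δ₁, α*+δ₁)` has exactly `k` extremal points in `[0, T_{k-1}(α*) + a]`, with minimum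
values `< -β` and maximum values `> β`; moreover any two such solutions intersect between
any two of their consecutive extremal points, and in `(T_{k-1}(α*), Z_k(α*))`. -/
def DeltaOneLemma (f : ℝ → ℝ) (β : ℝ) (u : ℝ → ℝ → ℝ) (k : ℕ) (αs a δ₁ : ℝ) : Prop :=
  0 < a ∧ 0 < δ₁ ∧
    (∀ α ∈ Ioo (αs - δ₁) (αs + δ₁),
      (ExtSet u α (Tk u (k - 1) αs + a)).Finite ∧
        (ExtSet u α (Tk u (k - 1) αs + a)).ncard = k ∧
        ∀ r ∈ ExtSet u α (Tk u (k - 1) αs + a),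
          (IsLocalMin (u α) r → u α r < -β) ∧ (IsLocalMax (u α) r → β < u α r)) ∧
    ∀ α₁ ∈ Ioo (αs - δ₁) (αs + δ₁), ∀ α₂ ∈ Ioo (αs - δ₁) (αs + δ₁), α₁ < α₂ →
      (∀ i : ℕ, 1 ≤ i → i ≤ k - 1 →
        ∃ t, max (Tk u (i - 1) α₁) (Tk u (i - 1) α₂) < t ∧
          t < min (Tk u i α₁) (Tk u i α₂) ∧ u α₁ t = u α₂ t) ∧
      ∃ t, Tk u (k - 1) αs < t ∧ (BddAbove (ZsetK u k αs) → t < Zk u k αs) ∧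
        u α₁ t = u α₂ t

/-- `ρ` is the inverse of the monotone branch of `v` on `[t₁, t₂]`, whose set of values
is `[m, M]`. -/
def InvBranch (v ρ : ℝ → ℝ) (t₁ t₂ m M : ℝ) : Prop :=
  (∀ s ∈ Icc m M, ρ s ∈ Icc t₁ t₂ ∧ v (ρ s) = s) ∧
    ∀ s ∈ Ioo m M, HasDerivAt ρ (1 / deriv v (ρ s)) s

/-- `ρ` inverts a decreasing branch of `v` over the value interval `[m, M]`, along which
`(v')² + 2F > 0`. -/
def DecBranchInv (f : ℝ → ℝ) (v ρ : ℝ → ℝ) (m M : ℝ) : Prop :=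
  ∀ s ∈ Icc m M, 0 ≤ ρ s ∧ v (ρ s) = s ∧ deriv v (ρ s) < 0 ∧
    HasDerivAt ρ (1 / deriv v (ρ s)) s ∧ 0 < (deriv v (ρ s)) ^ 2 + 2 * Fint f s

/-- The functional `Q(s) = -4 (F/f)(s) r/r' - r²/(r')² - 2 r² F(s) + H(s)` computed along
the branch inverse `ρ`. -/
def Qfun (f H ρ : ℝ → ℝ) (s : ℝ) : ℝ :=
  -4 * (Fint f s / f s) * (ρ s / deriv ρ s) - (ρ s) ^ 2 / (deriv ρ s) ^ 2 -
    2 * (ρ s) ^ 2 * Fint f s + H s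

/-- The functional `P(s) = -2n (F/f)(s) r^{n-1}/r' - r^n/(r')² - 2 r^n F(s)`. -/
def Pfun (n : ℕ) (f : ℝ → ℝ) (ρ : ℝ → ℝ) (s : ℝ) : ℝ :=
  -(2 * (n : ℝ)) * (Fint f s / f s) * (ρ s ^ (n - 1) / deriv ρ s) -
    ρ s ^ n / (deriv ρ s) ^ 2 - 2 * ρ s ^ n * Fint f s

/-- The functional `W(s) = r(s) √((u'(r(s)))² + 2 F(s))`. -/
def Wfun (f v ρ : ℝ → ℝ) (s : ℝ) : ℝ :=
  ρ s * Real.sqrt ((deriv v (ρ s)) ^ 2 + 2 * Fint f s)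

/-- The functional `W̃(s) = r(s)^{n-1} √((u'(r(s)))² + 2 F(s))`. -/
def Wtil (n : ℕ) (f : ℝ → ℝ) (v ρ : ℝ → ℝ) (s : ℝ) : ℝ :=
  ρ s ^ (n - 1) * Real.sqrt ((deriv v (ρ s)) ^ 2 + 2 * Fint f s)

/-- `v` changes sign at `z ∈ (0,∞)`: `v z = 0` and `v` takes both signs in every
neighborhood of `z` (within `(0,∞)`). -/
def SignChange (v : ℝ → ℝ) (z : ℝ) : Prop :=
  v z = 0 ∧ ∀ ε : ℝ, 0 < ε →
    (∃ x ∈ Ioo (z - ε) (z + ε) ∩ Ioi 0, 0 < v x) ∧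
    (∃ x ∈ Ioo (z - ε) (z + ε) ∩ Ioi 0, v x < 0)

/-- `v` has exactly `m` sign changes in `(0,∞)`. -/
def ExactSignChanges (v : ℝ → ℝ) (m : ℕ) : Prop :=
  {z | 0 < z ∧ SignChange v z}.Finite ∧ {z | 0 < z ∧ SignChange v z}.ncard = m

/-- Bound state: a C² solution of (E) on `(0,∞)` with `v' 0 = 0` and `v r → 0` as `r → ∞`. -/
def BoundState (n : ℕ) (f : ℝ → ℝ) (v : ℝ → ℝ) : Prop :=
  ContinuousOn v (Ici 0) ∧
    (∀ r : ℝ, 0 < r → DifferentiableAt ℝ v r ∧ DifferentiableAt ℝ (deriv v) r) ∧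
    (∀ r : ℝ, 0 < r → deriv (deriv v) r + ((n : ℝ) - 1) / r * deriv v r + f (v r) = 0) ∧
    deriv v 0 = 0 ∧ Tendsto v atTop (nhds 0)

/-- Solution of the Dirichlet problem on the ball of radius `R`. -/
def DirichletSol (n : ℕ) (f : ℝ → ℝ) (R : ℝ) (v : ℝ → ℝ) : Prop :=
  ContinuousOn v (Icc 0 R) ∧
    (∀ r ∈ Ioo (0:ℝ) R, DifferentiableAt ℝ v r ∧ DifferentiableAt ℝ (deriv v) r) ∧
    (∀ r ∈ Ioo (0:ℝ) R, deriv (deriv v) r + ((n : ℝ) - 1) / r * deriv v r + f (v r) = 0) ∧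
    deriv v 0 = 0 ∧ v R = 0

end
end Paper

open Paper Set Filter MeasureTheory

/-!
Being monotone and bounded, `u` converges to some `L`, so the equation bounds `‖u''‖` by a multiple
of `‖u'‖` plus a constant. Over a short interval `u'` therefore stays close to the difference
quotient of `u`, which tends to `0`; hence `u' → 0`. The equation then gives `u'' → -f L`, and
this limit must vanish because `u'` converges.
-/

open scoped Topology

section MonotoneLimit

variable {ι α : Type*} [Preorder ι] [LinearOrder α] [TopologicalSpace α] [OrderTopology α]
  {s : Set ι} {u : ι → α} {L : α}

theorem tendsto_atTop_of_monotoneOn_of_isLUB (hs : s ∈ atTop) (hu : MonotoneOn u s)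
    (hL : IsLUB (u '' s) L) : Tendsto u atTop (𝓝 L) := by
  refine tendsto_order.2 ⟨fun y hy => ?_, fun y hy => ?_⟩
  · obtain ⟨_, ⟨x, hx, rfl⟩, hyx⟩ := (lt_isLUB_iff hL).1 hy
    filter_upwards [hs, eventually_ge_atTop x] with r hr hxr
    exact hyx.trans_le (hu hx hr hxr)
  · filter_upwards [hs] with r hr
    exact (hL.1 (mem_image_of_mem u hr)).trans_lt hy

theorem tendsto_atTop_of_antitoneOn_of_isGLB (hs : s ∈ atTop) (hu : AntitoneOn u s)
    (hL : IsGLB (u '' s) L) : Tendsto u atTop (𝓝 L) :=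
  tendsto_atTop_of_monotoneOn_of_isLUB (α := αᵒᵈ) hs hu.dual_right hL.dual

end MonotoneLimit

theorem exists_tendsto_atTop_of_monotoneOn_or_antitoneOn {ι α : Type*} [Preorder ι]
    [IsDirectedOrder ι] [Nonempty ι] [ConditionallyCompleteLinearOrder α] [TopologicalSpace α]
    [OrderTopology α] {s : Set ι} {u : ι → α} (hs : s ∈ atTop)
    (hu : MonotoneOn u s ∨ AntitoneOn u s) (hbelow : BddBelow (u '' s))
    (habove : BddAbove (u '' s)) : ∃ L, Tendsto u atTop (𝓝 L) := by
  have hne : (u '' s).Nonempty := (Filter.nonempty_of_mem hs).image u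
  rcases hu with hmono | hanti
  · exact ⟨_, tendsto_atTop_of_monotoneOn_of_isLUB hs hmono (isLUB_csSup hne habove)⟩
  · exact ⟨_, tendsto_atTop_of_antitoneOn_of_isGLB hs hanti (isGLB_csInf hne hbelow)⟩

theorem tendsto_add_const_sub_zero {E : Type*} [AddGroup E] [TopologicalSpace E]
    [IsTopologicalAddGroup E] {u : ℝ → E} {L : E} (hL : Tendsto u atTop (𝓝 L)) (h : ℝ) :
    Tendsto (fun r => u (r + h) - u r) atTop (𝓝 0) := by
  simpa using (hL.comp (tendsto_atTop_add_const_right atTop h tendsto_id)).sub hL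

section DerivativeAtInfinity

variable {E : Type*} [NormedAddCommGroup E] [NormedSpace ℝ E] {u v w : ℝ → E} {L : E}

theorem norm_mul_le_norm_sub_add_of_norm_deriv_sub_le {a b B : ℝ} {c : E} (hab : a ≤ b)
    (hu : ∀ t ∈ Icc a b, HasDerivWithinAt u (v t) (Icc a b) t)
    (hB : ∀ t ∈ Icc a b, ‖v t - c‖ ≤ B) :
    ‖c‖ * (b - a) ≤ ‖u b - u a‖ + B * (b - a) := by
  have hderiv : ∀ t ∈ Icc a b,
      HasDerivWithinAt (fun t => u t - t • c) (v t - c) (Icc a b) t := fun t ht => by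
    simpa only [id_eq, one_smul] using (hu t ht).fun_sub ((hasDerivWithinAt_id t _).smul_const c)
  have hmvt : ‖u b - b • c - (u a - a • c)‖ ≤ B * (b - a) :=
    norm_image_sub_le_of_norm_deriv_le_segment' hderiv
      (fun t ht => hB t (Ico_subset_Icc_self ht)) b (right_mem_Icc.2 hab)
  calc ‖c‖ * (b - a) = ‖(b - a) • c‖ := by
        rw [norm_smul, Real.norm_of_nonneg (sub_nonneg.2 hab), mul_comm]
    _ = ‖u b - u a - (u b - b • c - (u a - a • c))‖ := by congr 1; module
    _ ≤ ‖u b - u a‖ + B * (b - a) := (norm_sub_le _ _).trans (by gcongr)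

/-- At the point `m` where `‖v‖` is largest, `v` varies by at most `(K ‖v m‖ + M) (b - a)`, so
`v m` is close to the average slope of `u`; as `K (b - a) ≤ 1 / 2`, the resulting multiple of
`‖v m‖` can be absorbed. -/
theorem norm_deriv_le_of_norm_second_deriv_le {a b K M : ℝ} (hab : a < b) (hK : 0 ≤ K)
    (hKab : K * (b - a) ≤ 1 / 2)
    (hu : ∀ t ∈ Icc a b, HasDerivWithinAt u (v t) (Icc a b) t)
    (hv : ∀ t ∈ Icc a b, HasDerivWithinAt v (w t) (Icc a b) t)
    (hw : ∀ t ∈ Icc a b, ‖w t‖ ≤ K * ‖v t‖ + M) {t : ℝ} (ht : t ∈ Icc a b) :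
    ‖v t‖ ≤ 2 * (‖u b - u a‖ / (b - a) + M * (b - a)) := by
  obtain ⟨m, hm, hmax⟩ := isCompact_Icc.exists_isMaxOn (nonempty_Icc.2 hab.le)
    (fun s hs => (hv s hs).continuousWithinAt.norm : ContinuousOn (fun s => ‖v s‖) (Icc a b))
  have hpos : 0 < b - a := sub_pos.2 hab
  have hwm : ∀ s ∈ Icc a b, ‖w s‖ ≤ K * ‖v m‖ + M := fun s hs =>
    (hw s hs).trans (by gcongr; exact hmax hs)
  have hosc : ∀ s ∈ Icc a b, ‖v s - v m‖ ≤ (K * ‖v m‖ + M) * (b - a) := fun s hs =>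
    calc ‖v s - v m‖ ≤ (K * ‖v m‖ + M) * ‖s - m‖ :=
          (convex_Icc a b).norm_image_sub_le_of_norm_hasDerivWithin_le hv hwm hm hs
      _ ≤ (K * ‖v m‖ + M) * (b - a) :=
          mul_le_mul_of_nonneg_left (Real.dist_le_of_mem_Icc hs hm)
            ((norm_nonneg _).trans (hwm m hm))
  have hslope : ‖v m‖ ≤ ‖u b - u a‖ / (b - a) + (K * ‖v m‖ + M) * (b - a) := by
    rw [div_add' _ _ _ hpos.ne', le_div_iff₀ hpos]
    exact norm_mul_le_norm_sub_add_of_norm_deriv_sub_le hab.le hu hosc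
  have habsorb : K * (b - a) * ‖v m‖ ≤ 1 / 2 * ‖v m‖ := by gcongr
  have hle : ‖v t‖ ≤ ‖v m‖ := hmax ht
  linarith

theorem eventually_norm_deriv_le_of_norm_second_deriv_le {h K M : ℝ} (hh : 0 < h) (hK : 0 ≤ K)
    (hKh : K * h ≤ 1 / 2) (hu : ∀ᶠ r in atTop, HasDerivAt u (v r) r)
    (hv : ∀ᶠ r in atTop, HasDerivAt v (w r) r) (hw : ∀ᶠ r in atTop, ‖w r‖ ≤ K * ‖v r‖ + M) :
    ∀ᶠ r in atTop, ‖v r‖ ≤ 2 * (‖u (r + h) - u r‖ / h + M * h) := by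
  obtain ⟨A, hA⟩ := eventually_atTop.1 (hu.and (hv.and hw))
  filter_upwards [eventually_ge_atTop A] with r hr
  have hA' : ∀ t ∈ Icc r (r + h), _ := fun t ht => hA t (hr.trans ht.1)
  simpa only [add_sub_cancel_left] using
    norm_deriv_le_of_norm_second_deriv_le (lt_add_of_pos_right r hh) hK
      (by simpa only [add_sub_cancel_left] using hKh)
      (fun t ht => (hA' t ht).1.hasDerivWithinAt) (fun t ht => (hA' t ht).2.1.hasDerivWithinAt)
      (fun t ht => (hA' t ht).2.2) (left_mem_Icc.2 (le_add_of_nonneg_right hh.le))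

theorem tendsto_deriv_zero_of_norm_second_deriv_le {K M : ℝ} (hL : Tendsto u atTop (𝓝 L))
    (hu : ∀ᶠ r in atTop, HasDerivAt u (v r) r) (hv : ∀ᶠ r in atTop, HasDerivAt v (w r) r)
    (hw : ∀ᶠ r in atTop, ‖w r‖ ≤ K * ‖v r‖ + M) : Tendsto v atTop (𝓝 0) := by
  have hwabs : ∀ᶠ r in atTop, ‖w r‖ ≤ |K| * ‖v r‖ + M :=
    hw.mono fun r hr => hr.trans (by gcongr; exact le_abs_self K)
  refine Metric.tendsto_nhds.2 fun ε hε => ?_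
  obtain ⟨h, hh, hKh, hMh⟩ : ∃ h > 0, |K| * h < 1 / 2 ∧ 2 * (M * h) < ε := by
    have hKsmall : ∀ᶠ h in 𝓝 0, |K| * h < 1 / 2 :=
      ContinuousAt.eventually_lt (by fun_prop) continuousAt_const (by norm_num)
    have hMsmall : ∀ᶠ h in 𝓝 0, 2 * (M * h) < ε :=
      ContinuousAt.eventually_lt (by fun_prop) continuousAt_const (by simpa using hε)
    exact (hKsmall.and hMsmall).exists_gt
  have hlim : Tendsto (fun r => 2 * (‖u (r + h) - u r‖ / h + M * h)) atTop
      (𝓝 (2 * (M * h))) := by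
    simpa using (((tendsto_add_const_sub_zero hL h).norm.div_const h).add_const
      (M * h)).const_mul 2
  filter_upwards [hlim.eventually_lt_const hMh,
    eventually_norm_deriv_le_of_norm_second_deriv_le hh (abs_nonneg K) hKh.le hu hv hwabs]
    with r hr hvr
  simpa only [dist_zero_right] using hvr.trans_lt hr

theorem eq_zero_of_tendsto_of_tendsto_deriv {c : E} (hL : Tendsto u atTop (𝓝 L))
    (hu : ∀ᶠ r in atTop, HasDerivAt u (v r) r) (hv : Tendsto v atTop (𝓝 c)) : c = 0 := by
  refine norm_le_zero_iff.1 (le_of_forall_pos_le_add fun ε hε => ?_)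
  have hclose : ∀ᶠ r in atTop, ‖v r - c‖ < ε := by
    simpa [dist_eq_norm] using Metric.tendsto_nhds.1 hv ε hε
  obtain ⟨A, hA⟩ := eventually_atTop.1 (hu.and hclose)
  have hlim : Tendsto (fun r => ‖u (r + 1) - u r‖ + ε) atTop (𝓝 (0 + ε)) := by
    simpa using (tendsto_add_const_sub_zero hL 1).norm.add_const ε
  refine ge_of_tendsto hlim ?_
  filter_upwards [eventually_ge_atTop A] with r hr
  simpa using norm_mul_le_norm_sub_add_of_norm_deriv_sub_le (lt_add_one r).le
    (fun t ht => (hA t (hr.trans ht.1)).1.hasDerivWithinAt)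
    (fun t ht => (hA t (hr.trans ht.1)).2.le)

theorem tendsto_deriv_zero_and_eq_zero_of_tendsto_of_damped {a : ℝ → ℝ} {f : E → E}
    (hf : ContinuousAt f L) (ha : IsBoundedUnder (· ≤ ·) atTop (norm ∘ a))
    (hL : Tendsto u atTop (𝓝 L)) (hu : ∀ᶠ r in atTop, HasDerivAt u (v r) r)
    (hv : ∀ᶠ r in atTop, HasDerivAt v (w r) r)
    (heq : ∀ᶠ r in atTop, w r + a r • v r + f (u r) = 0) :
    Tendsto v atTop (𝓝 0) ∧ f L = 0 := by
  have hfL : Tendsto (fun r => f (u r)) atTop (𝓝 (f L)) := hf.tendsto.comp hL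
  have hw : ∀ᶠ r in atTop, w r = -(a r • v r) - f (u r) := by
    filter_upwards [heq] with r hr
    rw [eq_sub_iff_add_eq, eq_neg_iff_add_eq_zero, add_right_comm, hr]
  obtain ⟨K, hK⟩ := ha.eventually_le
  obtain ⟨M, hM⟩ := hfL.norm.isBoundedUnder_le.eventually_le
  have hwbound : ∀ᶠ r in atTop, ‖w r‖ ≤ K * ‖v r‖ + M := by
    filter_upwards [hw, hK, hM] with r hwr hKr hMr
    calc ‖w r‖ = ‖-(a r • v r) - f (u r)‖ := by rw [hwr]
      _ ≤ ‖a r‖ * ‖v r‖ + ‖f (u r)‖ := by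
          simpa only [norm_neg, norm_smul] using norm_sub_le (-(a r • v r)) (f (u r))
      _ ≤ K * ‖v r‖ + M := by gcongr; exact hKr
  have hv0 : Tendsto v atTop (𝓝 0) := tendsto_deriv_zero_of_norm_second_deriv_le hL hu hv hwbound
  have hwlim : Tendsto w atTop (𝓝 (-f L)) := by
    refine Tendsto.congr' (hw.mono fun r hr => hr.symm) ?_
    simpa using (ha.smul_tendsto_zero hv0).neg.sub hfL
  exact ⟨hv0, neg_eq_zero.1 (eq_zero_of_tendsto_of_tendsto_deriv hv0 hv hwlim)⟩

end DerivativeAtInfinity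

theorem monotone_bounded_solution_limit_general {a f u : ℝ → ℝ} {R : ℝ} (hf : Continuous f)
    (ha : IsBoundedUnder (· ≤ ·) atTop (norm ∘ a))
    (hbdd : ∃ C : ℝ, ∀ r ∈ Ioi R, |u r| ≤ C)
    (hmono : MonotoneOn u (Ioi R) ∨ AntitoneOn u (Ioi R))
    (hud : ∀ r ∈ Ioi R, DifferentiableAt ℝ u r ∧ DifferentiableAt ℝ (deriv u) r)
    (hueq : ∀ r ∈ Ioi R, deriv (deriv u) r + a r * deriv u r + f (u r) = 0) :
    ∃ L : ℝ, Tendsto u atTop (𝓝 L) ∧ Tendsto (deriv u) atTop (𝓝 0) ∧ f L = 0 := by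
  obtain ⟨C, hC⟩ := hbdd
  have hR : ∀ᶠ r in atTop, r ∈ Ioi R := Ioi_mem_atTop R
  obtain ⟨L, hL⟩ := exists_tendsto_atTop_of_monotoneOn_or_antitoneOn hR hmono
    ⟨-C, forall_mem_image.2 fun r hr => (abs_le.1 (hC r hr)).1⟩
    ⟨C, forall_mem_image.2 fun r hr => (abs_le.1 (hC r hr)).2⟩
  exact ⟨L, hL, tendsto_deriv_zero_and_eq_zero_of_tendsto_of_damped hf.continuousAt ha hL
    (hR.mono fun r hr => (hud r hr).1.hasDerivAt) (hR.mono fun r hr => (hud r hr).2.hasDerivAt)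
    (hR.mono hueq)⟩

/-- A bounded monotone C² solution of (E) on `(R,∞)` converges to a zero `L` of `f`,
and its derivative tends to `0`. -/
theorem monotone_bounded_solution_limit
    (n : ℕ) (hn : 2 ≤ n)
    (f : ℝ → ℝ) (hf : Continuous f)
    (R : ℝ) (hR : 0 < R)
    (u : ℝ → ℝ)
    (hbdd : ∃ C : ℝ, ∀ r ∈ Ioi R, |u r| ≤ C)
    (hmono : MonotoneOn u (Ioi R) ∨ AntitoneOn u (Ioi R))
    (hud : ∀ r ∈ Ioi R, DifferentiableAt ℝ u r ∧ DifferentiableAt ℝ (deriv u) r)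
    (hc2 : ContinuousOn (deriv (deriv u)) (Ioi R))
    (hueq : ∀ r ∈ Ioi R,
      deriv (deriv u) r + ((n : ℝ) - 1) / r * deriv u r + f (u r) = 0) :
    ∃ L : ℝ, Tendsto u atTop (nhds L) ∧ Tendsto (deriv u) atTop (nhds 0) ∧ f L = 0 :=
  monotone_bounded_solution_limit_general hf
    (tendsto_const_nhds.div_atTop tendsto_id).norm.isBoundedUnder_le hbdd hmono hud hueq
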